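/- Let R be a commutative ring and S a multiplicative subset of R with 0 ∉ S, viewed also as a multiplicative subset of R[x] via the constant embedding. Then S-gl.dim(R[x]) = S-gl.dim(R) + 1, where the S-global dimension of a ring A (with multiplicative subset S) is the least n ∈ ℕ ∪ {∞} such that Ext^{n+1}_A(M, N) is uniformly S-torsion for all A-modules M and N (and ∞ if no such n exists). -/

import Mathlib

open CategoryTheory

universe u

/-- The `S`-global dimension of a commutative ring `A` with multiplicative subset `S`:
the least `n ∈ ℕ∞` such that `Ext^{n+1}_A(M, N)` is uniformly `S`-torsion for all
`A`-modules `M, N` (`∞` if no such `n` exists). -/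
noncomputable def sGlDim (A : Type u) [CommRing A] (S : Submonoid A) : ℕ∞ :=
  sInf {c : ℕ∞ | ∃ n : ℕ, c = (n : ℕ∞) ∧ ∀ M N : ModuleCat.{u} A, ∃ s ∈ S,
    ∀ x : ((Ext A (ModuleCat.{u} A) (n + 1)).obj (Opposite.op M)).obj N, s • x = 0}

/-!
An `R[X]`-module `M` has a characteristic sequence `0 → R[X] ⊗ M → R[X] ⊗ M → M → 0`, with first
map `p ⊗ m ↦ X p ⊗ m - p ⊗ X m`, and `R → R[X]` is flat, so that `Ext` over `R[X]` out of `R[X] ⊗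
M` is `Ext` over `R` out of `M`. In the long exact sequence this makes `Ext^{n+1}(M, N)` over
`R[X]` killed by `s t` as soon as `s` kills `Ext^n(M, N)` and `t` kills `Ext^{n+1}(M, N)` over
`R`. When `X` acts as zero on `M` and `N`, the first map of the sequence induces zero on `Ext`, so
`Ext^n(M, N)` over `R` embeds into `Ext^{n+1}(M, N)` over `R[X]`. As every `R`-module arises in
this way, uniform torsion of `Ext^{n+1}` over `R[X]` is equivalent to uniform torsion of `Ext^n`
over `R`.
-/

universe v v' u' w w'

section Annihilator

open Abelian

variable (A : Type*) [CommRing A] {C : Type u} [Category.{v} C] [Abelian C] [Linear A C]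
  [HasExt.{w} C]

theorem annihilator_ext_congr {X X' Y Y' : C} (i : X ≅ X') (j : Y ≅ Y') (n : ℕ) :
    Module.annihilator A (Ext X Y n) = Module.annihilator A (Ext X' Y' n) := by
  refine LinearEquiv.annihilator_eq (LinearEquiv.ofLinearMap
    ((Ext.mk₀ i.inv).precompOfLinear A Y' (zero_add n) ∘ₗ
      (Ext.mk₀ j.hom).postcompOfLinear A X (add_zero n))
    ((Ext.mk₀ i.hom).precompOfLinear A Y (zero_add n) ∘ₗ
      (Ext.mk₀ j.inv).postcompOfLinear A X' (add_zero n)) ?_ ?_) <;>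
  · ext x
    simp

variable {S : ShortComplex C} (hS : S.ShortExact) (Y : C) (n : ℕ)
include hS

theorem annihilator_ext_X₁_mul_annihilator_ext_X₂_le :
    Module.annihilator A (Ext S.X₁ Y n) * Module.annihilator A (Ext S.X₂ Y (n + 1)) ≤
      Module.annihilator A (Ext S.X₃ Y (n + 1)) := by
  refine Ideal.mul_le.2 fun s hs t ht ↦ Module.mem_annihilator.2 fun x ↦ ?_
  rw [Module.mem_annihilator] at hs ht
  have ht_comp : (Ext.mk₀ S.g).comp (t • x) (zero_add _) = 0 := by rw [Ext.comp_smul, ht]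
  obtain ⟨y, hy⟩ := Ext.contravariant_sequence_exact₃ hS Y _ ht_comp (add_comm 1 n)
  rw [mul_smul, ← hy, ← Ext.comp_smul, hs, Ext.comp_zero]

theorem annihilator_ext_X₁_le_of_projective_X₂ [Projective S.X₂] :
    Module.annihilator A (Ext S.X₁ Y n) ≤ Module.annihilator A (Ext S.X₃ Y (n + 1)) := by
  have := Ext.subsingleton_of_projective S.X₂ Y n
  simpa [Module.annihilator_eq_top_iff.2 this] using
    annihilator_ext_X₁_mul_annihilator_ext_X₂_le A hS Y n

theorem annihilator_ext_X₃_le_of_mk₀_comp_eq_zero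
    (hf : ∀ x : Ext S.X₂ Y n, (Ext.mk₀ S.f).comp x (zero_add n) = 0) :
    Module.annihilator A (Ext S.X₃ Y (n + 1)) ≤ Module.annihilator A (Ext S.X₁ Y n) := by
  refine (hS.extClass.precompOfLinear A Y (add_comm 1 n)).annihilator_le_of_injective <|
    (injective_iff_map_eq_zero _).2 fun y hy ↦ ?_
  obtain ⟨x, rfl⟩ := Ext.contravariant_sequence_exact₁ hS Y y (add_comm 1 n) hy
  exact hf x

end Annihilator

section DerivedExt

variable (A : Type*) [CommRing A] {C : Type u} [Category.{v} C] [Abelian C] [Linear A C]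
  [HasExt.{w} C]

theorem smul_extMk {X Y : C} (P : ProjectiveResolution X) {n m : ℕ} (hm : n + 1 = m) (a : A)
    (f : P.complex.X n ⟶ Y) (hf : P.complex.d m n ≫ f = 0) :
    a • P.extMk f m hm hf = P.extMk (a • f) m hm (by simp [hf]) := by
  simp [Abelian.Ext.smul_eq_comp_mk₀, P.extMk_comp_mk₀]

variable {X : C} (P : ProjectiveResolution X) (Y : C) (n : ℕ)

/-- The part `Hom(Pₙ, Y) → Hom(Pₙ₊₁, Y) → Hom(Pₙ₊₂, Y)` of the cochain complex computing
`Ext^{n+1}(X, Y)` from a projective resolution `P` of `X`. -/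
abbrev homShortComplex : ShortComplex (ModuleCat.{v} A) :=
  (P.complex.linearYonedaObj A Y).sc' n (n + 1) (n + 2)

/-- The class in `Abelian.Ext X Y (n + 1)` of a cocycle, as a linear map. -/
noncomputable def extMkLinearMap :
    LinearMap.ker (homShortComplex A P Y n).g.hom →ₗ[A] Abelian.Ext X Y (n + 1) where
  toFun f := P.extMk f.1 (n + 2) rfl f.2
  map_add' f g := (P.add_extMk f.1 g.1 (n + 2) rfl f.2 g.2).symm
  map_smul' a f := (smul_extMk A P rfl a f.1 f.2).symm

theorem extMkLinearMap_surjective : Function.Surjective (extMkLinearMap A P Y n) := fun x ↦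
  let ⟨f, hf, hx⟩ := P.extMk_surjective x (n + 2) rfl
  ⟨⟨f, hf⟩, hx⟩

theorem ker_extMkLinearMap :
    LinearMap.ker (extMkLinearMap A P Y n) =
      LinearMap.range (homShortComplex A P Y n).moduleCatToCycles := by
  ext f
  exact (P.extMk_eq_zero_iff f.1 (n + 2) rfl f.2 n rfl).trans
    (exists_congr fun g ↦ (Subtype.ext_iff (a1 := (homShortComplex A P Y n).moduleCatToCycles g)
      (a2 := f)).symm)

/-- The `Ext` modules defined by deriving `Hom` in its first variable agree, in positive degrees,
with those defined as morphisms in the derived category. -/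
noncomputable def derivedExtLinearEquiv [EnoughProjectives C] (X Y : C) (n : ℕ) :
    ((Ext A C (n + 1)).obj (Opposite.op X)).obj Y ≃ₗ[A] Abelian.Ext X Y (n + 1) :=
  let P := projectiveResolution X
  (P.isoExt (n + 1) Y ≪≫
      ShortComplex.homologyMapIso ((P.complex.linearYonedaObj A Y).isoSc' n (n + 1) (n + 2)
        (by simp) (by simp)) ≪≫
      (homShortComplex A P Y n).moduleCatHomologyIso).toLinearEquiv ≪≫ₗ
    Submodule.quotEquivOfEq _ _ (ker_extMkLinearMap A P Y n).symm ≪≫ₗ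
    (extMkLinearMap A P Y n).quotKerEquivOfSurjective (extMkLinearMap_surjective A P Y n)

end DerivedExt

section Adjunction

open Abelian Limits

variable {C : Type u} [Category.{v} C] [Abelian C] [HasExt.{w} C]
  {D : Type u'} [Category.{v'} D] [Abelian D] [HasExt.{w'} D]
  {F : C ⥤ D} {G : D ⥤ C} (adj : F ⊣ G)
  [G.Additive] [PreservesFiniteLimits G] [PreservesFiniteColimits G]

/-- The map `Ext(F X, Y) → Ext(X, G Y)` induced by an adjunction `F ⊣ G` with `G` exact: apply `G`
and precompose with the unit. -/
noncomputable def adjunctionExtMap (X : C) (Y : D) (n : ℕ) :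
    Ext (F.obj X) Y n →+ Ext X (G.obj Y) n :=
  ((Ext.mk₀ (adj.unit.app X)).precomp (G.obj Y) (zero_add n)).comp
    (G.mapExtAddHom (F.obj X) Y n)

theorem adjunctionExtMap_apply {X : C} {Y : D} {n : ℕ} (x : Ext (F.obj X) Y n) :
    adjunctionExtMap adj X Y n x =
      (Ext.mk₀ (adj.unit.app X)).comp (x.mapExactFunctor G) (zero_add n) := rfl

theorem adjunctionExtMap_mk₀ {X : C} {Y : D} (f : F.obj X ⟶ Y) :
    adjunctionExtMap adj X Y 0 (Ext.mk₀ f) = Ext.mk₀ (adj.homEquiv X Y f) := by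
  rw [adjunctionExtMap_apply, Ext.mapExactFunctor_mk₀, Ext.mk₀_comp_mk₀, adj.homEquiv_unit]

theorem adjunctionExtMap_mk₀_comp {X X' : C} {Y : D} {n : ℕ} (f : X ⟶ X')
    (x : Ext (F.obj X') Y n) :
    adjunctionExtMap adj X Y n ((Ext.mk₀ (F.map f)).comp x (zero_add n)) =
      (Ext.mk₀ f).comp (adjunctionExtMap adj X' Y n x) (zero_add n) := by
  simp only [adjunctionExtMap_apply, Ext.mapExactFunctor_comp, Ext.mapExactFunctor_mk₀,
    Ext.mk₀_comp_mk₀_assoc]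
  congr 2
  exact (adj.unit.naturality f).symm

theorem adjunctionExtMap_extClass_comp [F.Additive] [PreservesFiniteLimits F]
    [PreservesFiniteColimits F] {S : ShortComplex C} (hS : S.ShortExact) {Y : D} {n : ℕ}
    (y : Ext (S.map F).X₁ Y n) :
    adjunctionExtMap adj S.X₃ Y (n + 1) ((hS.map_of_exact F).extClass.comp y (add_comm 1 n)) =
      hS.extClass.comp (adjunctionExtMap adj S.X₁ Y n y) (add_comm 1 n) := by
  have hunit : hS.extClass.comp (Ext.mk₀ (adj.unit.app S.X₁)) (add_zero 1) =
      (Ext.mk₀ (adj.unit.app S.X₃)).comp ((hS.map_of_exact F).map_of_exact G).extClass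
        (zero_add 1) :=
    ShortComplex.ShortExact.extClass_naturality hS ((hS.map_of_exact F).map_of_exact G)
      (S.mapNatTrans adj.unit)
  calc (Ext.mk₀ (adj.unit.app S.X₃)).comp
        (((hS.map_of_exact F).extClass.comp y (add_comm 1 n)).mapExactFunctor G) (zero_add _)
    _ = (Ext.mk₀ (adj.unit.app S.X₃)).comp
        (((hS.map_of_exact F).map_of_exact G).extClass.comp (y.mapExactFunctor G)
          (add_comm 1 n)) (zero_add _) := by
      rw [Ext.mapExactFunctor_comp, Ext.mapExactFunctor_extClass]
      rfl
    _ = (hS.extClass.comp (Ext.mk₀ (adj.unit.app S.X₁)) (add_zero 1)).comp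
        (y.mapExactFunctor G) (add_comm 1 n) := by
      rw [hunit]
      exact (Ext.comp_assoc _ _ _ (zero_add 1) (add_comm 1 n) (by lia)).symm
    _ = _ := Ext.comp_assoc_of_second_deg_zero _ _ _ _

theorem adjunctionExtMap_bijective [PreservesFiniteLimits F] [EnoughProjectives C] (X : C) (Y : D)
    (n : ℕ) : Function.Bijective (adjunctionExtMap adj X Y n) := by
  have := adj.left_adjoint_additive
  have := adj.leftAdjoint_preservesColimits
  induction n generalizing X with
  | zero =>
    have hcomp : adjunctionExtMap adj X Y 0 ∘ Ext.mk₀ = Ext.mk₀ ∘ adj.homEquiv X Y :=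
      funext fun f ↦ adjunctionExtMap_mk₀ adj f
    rw [← Function.Bijective.of_comp_iff _ (Ext.mk₀_bijective (F.obj X) Y), hcomp]
    exact (Ext.mk₀_bijective X (G.obj Y)).comp (adj.homEquiv X Y).bijective
  | succ n ih =>
    let S := ShortComplex.mk _ _ (kernel.condition (Projective.π X))
    have hS : S.ShortExact := { exact := ShortComplex.exact_kernel (Projective.π X) }
    have hFS := hS.map_of_exact F
    have : Projective S.X₂ := Projective.projective_over X
    have : Projective (S.map F).X₂ := adj.map_projective _ this
    exact AddMonoidHom.bijective_of_surjective_of_bijective_of_right_exact _ _ _ _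
      (adjunctionExtMap adj S.X₂ Y n) (adjunctionExtMap adj S.X₁ Y n)
      (adjunctionExtMap adj S.X₃ Y (n + 1))
      (AddMonoidHom.ext fun x ↦ (adjunctionExtMap_mk₀_comp adj S.f x).symm)
      (AddMonoidHom.ext fun x ↦ (adjunctionExtMap_extClass_comp adj hS x).symm)
      ((ShortComplex.ab_exact_iff_function_exact _).1
        (Ext.contravariant_sequence_exact₁' hFS Y n (n + 1) (add_comm 1 n)))
      ((ShortComplex.ab_exact_iff_function_exact _).1
        (Ext.contravariant_sequence_exact₁' hS (G.obj Y) n (n + 1) (add_comm 1 n)))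
      (ih _).surjective (ih _)
      (fun x ↦ Ext.contravariant_sequence_exact₃ hFS _ x (Ext.eq_zero_of_projective _)
        (add_comm 1 n))
      (fun x ↦ Ext.contravariant_sequence_exact₃ hS _ x (Ext.eq_zero_of_projective _)
        (add_comm 1 n))

end Adjunction

section BaseChange

open Abelian ModuleCat

variable {R A : Type u} [CommRing R] [CommRing A] (φ : R →+* A)

theorem smul_mapExactFunctor_restrictScalars {M N : ModuleCat.{u} A} {n : ℕ} (r : R)
    (x : Ext M N n) :
    (φ r • x).mapExactFunctor (restrictScalars φ) = r • x.mapExactFunctor (restrictScalars φ) := by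
  rw [Ext.smul_eq_comp_mk₀, Ext.mapExactFunctor_comp, Ext.mapExactFunctor_mk₀,
    Ext.smul_eq_comp_mk₀]
  rfl

theorem adjunctionExtMap_extendRestrictScalarsAdj_smul {M : ModuleCat.{u} R} {N : ModuleCat.{u} A}
    {n : ℕ} (r : R) (x : Ext ((extendScalars φ).obj M) N n) :
    adjunctionExtMap (extendRestrictScalarsAdj φ) M N n (φ r • x) =
      r • adjunctionExtMap (extendRestrictScalarsAdj φ) M N n x := by
  rw [adjunctionExtMap_apply, smul_mapExactFunctor_restrictScalars, Ext.comp_smul,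
    adjunctionExtMap_apply]

variable {φ}

theorem mem_annihilator_ext_extendScalars_iff (hφ : φ.Flat) (M : ModuleCat.{u} R)
    (N : ModuleCat.{u} A) (n : ℕ) (r : R) :
    φ r ∈ Module.annihilator A (Ext ((extendScalars φ).obj M) N n) ↔
      r ∈ Module.annihilator R (Ext M ((restrictScalars φ).obj N) n) := by
  have := preservesFiniteLimits_extendScalars_of_flat hφ
  have hbij := adjunctionExtMap_bijective (extendRestrictScalarsAdj φ) M N n
  rw [Module.mem_annihilator, Module.mem_annihilator, hbij.surjective.forall]
  refine forall_congr' fun x ↦ ?_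
  rw [← adjunctionExtMap_extendRestrictScalarsAdj_smul, map_eq_zero_iff _ hbij.injective]

end BaseChange

section Characteristic

open ModuleCat Polynomial TensorProduct

variable {R : Type u} [CommRing R]

/-- The map `m ↦ Xⁿ ⊗ m` from an `R`-module `L` to `R[X] ⊗ L`, the latter as an `R`-module. -/
noncomputable def xPowTmul (L : ModuleCat.{u} R) (n : ℕ) :
    L ⟶ (restrictScalars (C : R →+* R[X])).obj ((extendScalars C).obj L) :=
  (extendRestrictScalarsAdj C).unit.app L ≫ (restrictScalars C).map ((X ^ n : R[X]) • 𝟙 _)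

variable (R) in
/-- The ring `R[X]`, made an `R`-module by restricting its `R[X]`-action along `C`, is the usual
`R`-module `R[X]`. -/
noncomputable def restrictScalarsPolynomialEquiv :
    (restrictScalars (C : R →+* R[X])).obj (of R[X] R[X]) ≃ₗ[R] R[X] :=
  { AddEquiv.refl R[X] with map_smul' := fun r _ ↦ (Polynomial.smul_eq_C_mul r).symm }

/-- The `R`-module underlying the extension of scalars of `L` is `R[X] ⊗ L`; tensoring in the
`R`-algebra `R[X]` gives access to the lemmas on linear maps out of polynomials. -/
noncomputable def extendScalarsTensorIso (L : ModuleCat.{u} R) :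
    (restrictScalars (C : R →+* R[X])).obj ((extendScalars C).obj L) ≅ of R (R[X] ⊗[R] L) :=
  (TensorProduct.congr (restrictScalarsPolynomialEquiv R) (LinearEquiv.refl R L)).toModuleIso
    (X₁ := (restrictScalars (C : R →+* R[X])).obj ((extendScalars C).obj L))

theorem mk_X_pow_comp_extendScalarsTensorIso_inv (L : ModuleCat.{u} R) (n : ℕ) :
    ofHom (TensorProduct.mk R R[X] L (X ^ n)) ≫ (extendScalarsTensorIso L).inv = xPowTmul L n := by
  rw [Iso.comp_inv_eq]
  ext m
  exact congrArg (· ⊗ₜ[R] m) (mul_one (X ^ n : R[X])).symm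

theorem hom_ext_of_xPowTmul_comp {L N : ModuleCat.{u} R}
    {f g : (restrictScalars (C : R →+* R[X])).obj ((extendScalars C).obj L) ⟶ N}
    (h : ∀ n, xPowTmul L n ≫ f = xPowTmul L n ≫ g) : f = g := by
  rw [← cancel_epi (extendScalarsTensorIso L).inv]
  ext n m
  simpa [X_pow_eq_monomial, ← mk_X_pow_comp_extendScalarsTensorIso_inv]
    using ConcreteCategory.congr_hom (h n) m

/-- The map `R[X] ⊗ L → N` sending `∑ Xⁿ ⊗ mₙ` to `∑ T n mₙ`. -/
noncomputable def xPowTmulDesc {L N : ModuleCat.{u} R} (T : ℕ → (L ⟶ N)) :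
    (restrictScalars (C : R →+* R[X])).obj ((extendScalars C).obj L) ⟶ N :=
  (extendScalarsTensorIso L).hom ≫
    ofHom (TensorProduct.lift (Polynomial.lsum fun n ↦ LinearMap.toSpanSingleton R _ (T n).hom))

theorem xPowTmul_comp_xPowTmulDesc {L N : ModuleCat.{u} R} (T : ℕ → (L ⟶ N)) (n : ℕ) :
    xPowTmul L n ≫ xPowTmulDesc T = T n := by
  rw [← mk_X_pow_comp_extendScalarsTensorIso_inv, xPowTmulDesc]
  ext m
  simp [Polynomial.lsum_apply, X_pow_eq_monomial]

theorem xPowTmul_comp_map_extendScalars_map {L L' : ModuleCat.{u} R} (f : L ⟶ L') (n : ℕ) :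
    xPowTmul L n ≫ (restrictScalars C).map ((extendScalars C).map f) = f ≫ xPowTmul L' n := by
  ext m
  rfl

theorem xPowTmul_comp_map_X_smul (L : ModuleCat.{u} R) (n : ℕ) :
    xPowTmul L n ≫ (restrictScalars C).map ((X : R[X]) • 𝟙 _) = xPowTmul L (n + 1) := by
  rw [xPowTmul, xPowTmul, Category.assoc, ← Functor.map_comp, Linear.smul_comp, Category.id_comp,
    smul_smul, pow_succ]

variable (M : ModuleCat.{u} R[X])

/-- The endomorphism `p ⊗ m ↦ X p ⊗ m - p ⊗ X m` of `R[X] ⊗ M`, for an `R[X]`-module `M`. -/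
noncomputable def characteristicMap :
    (extendScalars (C : R →+* R[X])).obj ((restrictScalars C).obj M) ⟶
      (extendScalars C).obj ((restrictScalars C).obj M) :=
  (X : R[X]) • 𝟙 _ - (extendScalars C).map ((restrictScalars C).map ((X : R[X]) • 𝟙 M))

/-- The action map `p ⊗ m ↦ p m` from `R[X] ⊗ M` to an `R[X]`-module `M`. -/
noncomputable def actionMap :
    (extendScalars (C : R →+* R[X])).obj ((restrictScalars C).obj M) ⟶ M :=
  (extendRestrictScalarsAdj C).counit.app M

theorem characteristicMap_comp_actionMap : characteristicMap M ≫ actionMap M = 0 := by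
  have hnat : (extendScalars C).map ((restrictScalars C).map ((X : R[X]) • 𝟙 M)) ≫
      actionMap M = actionMap M ≫ ((X : R[X]) • 𝟙 M) :=
    (extendRestrictScalarsAdj C).counit_naturality _
  rw [characteristicMap, Preadditive.sub_comp, hnat]
  simp

theorem characteristicMap_eq_smul_id (hM : (X : R[X]) • 𝟙 M = 0) :
    characteristicMap M = (X : R[X]) • 𝟙 _ := by
  have : (extendScalars (C : R →+* R[X])).Additive :=
    (extendRestrictScalarsAdj C).left_adjoint_additive
  rw [characteristicMap, hM, Functor.map_zero, Functor.map_zero, sub_zero]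

theorem xPowTmul_comp_map_actionMap (n : ℕ) :
    xPowTmul ((restrictScalars C).obj M) n ≫ (restrictScalars C).map (actionMap M) =
      (restrictScalars C).map ((X ^ n : R[X]) • 𝟙 M) := by
  have hsmul : ((X ^ n : R[X]) • 𝟙 _) ≫ actionMap M = actionMap M ≫ ((X ^ n : R[X]) • 𝟙 M) := by
    simp
  rw [xPowTmul, Category.assoc, ← Functor.map_comp, hsmul, Functor.map_comp]
  exact (extendRestrictScalarsAdj C).right_triangle_components_assoc M _

theorem xPowTmul_zero_comp_map_actionMap :
    xPowTmul ((restrictScalars C).obj M) 0 ≫ (restrictScalars C).map (actionMap M) = 𝟙 _ := by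
  rw [xPowTmul_comp_map_actionMap, pow_zero, one_smul, CategoryTheory.Functor.map_id]

theorem xPowTmul_comp_map_characteristicMap (n : ℕ) :
    xPowTmul ((restrictScalars C).obj M) n ≫ (restrictScalars C).map (characteristicMap M) =
      xPowTmul ((restrictScalars C).obj M) (n + 1) -
        (restrictScalars C).map ((X : R[X]) • 𝟙 M) ≫ xPowTmul ((restrictScalars C).obj M) n := by
  rw [← xPowTmul_comp_map_X_smul, ← xPowTmul_comp_map_extendScalars_map, ← Preadditive.comp_sub,
    ← Functor.map_sub, characteristicMap]

/-- The map `m ↦ ∑ Xⁱ ⊗ Xⁿ⁻¹⁻ⁱ m`, the sum being over `i < n`. -/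
noncomputable def geomSumTmul : ℕ → ((restrictScalars (C : R →+* R[X])).obj M ⟶
    (restrictScalars C).obj ((extendScalars C).obj ((restrictScalars C).obj M)))
  | 0 => 0
  | n + 1 => xPowTmul _ n + (restrictScalars C).map ((X : R[X]) • 𝟙 M) ≫ geomSumTmul n

theorem geomSumTmul_comp_map_characteristicMap (n : ℕ) :
    geomSumTmul M n ≫ (restrictScalars C).map (characteristicMap M) =
      xPowTmul ((restrictScalars C).obj M) n - (restrictScalars C).map ((X ^ n : R[X]) • 𝟙 M) ≫
        xPowTmul ((restrictScalars C).obj M) 0 := by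
  induction n with
  | zero => simp [geomSumTmul]
  | succ n ih =>
    rw [geomSumTmul, Preadditive.add_comp, xPowTmul_comp_map_characteristicMap, Category.assoc, ih,
      Preadditive.comp_sub, ← Functor.map_comp_assoc, Linear.smul_comp, Category.id_comp,
      smul_smul, ← pow_succ', sub_add_sub_cancel]

theorem map_characteristicMap_comp_xPowTmulDesc_geomSumTmul :
    (restrictScalars C).map (characteristicMap M) ≫ xPowTmulDesc (geomSumTmul M) = 𝟙 _ :=
  hom_ext_of_xPowTmul_comp fun n ↦ by
    rw [← Category.assoc, xPowTmul_comp_map_characteristicMap, Preadditive.sub_comp,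
      Category.assoc, xPowTmul_comp_xPowTmulDesc, xPowTmul_comp_xPowTmulDesc, geomSumTmul,
      add_sub_cancel_right, Category.comp_id]

theorem xPowTmulDesc_geomSumTmul_comp_map_characteristicMap :
    xPowTmulDesc (geomSumTmul M) ≫ (restrictScalars C).map (characteristicMap M) =
      𝟙 _ - (restrictScalars C).map (actionMap M) ≫ xPowTmul ((restrictScalars C).obj M) 0 :=
  hom_ext_of_xPowTmul_comp fun n ↦ by
    rw [Preadditive.comp_sub, ← Category.assoc, ← Category.assoc, xPowTmul_comp_xPowTmulDesc,
      geomSumTmul_comp_map_characteristicMap, xPowTmul_comp_map_actionMap, Category.comp_id]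

/-- The characteristic sequence `0 → R[X] ⊗ M → R[X] ⊗ M → M → 0` of an `R[X]`-module `M`. -/
noncomputable abbrev characteristicShortComplex : ShortComplex (ModuleCat.{u} R[X]) :=
  ShortComplex.mk _ _ (characteristicMap_comp_actionMap M)

/-- The `R`-linear splitting of the characteristic sequence. -/
noncomputable def characteristicSplitting :
    ((characteristicShortComplex M).map (restrictScalars C)).Splitting where
  r := xPowTmulDesc (geomSumTmul M)
  s := xPowTmul ((restrictScalars C).obj M) 0
  f_r := map_characteristicMap_comp_xPowTmulDesc_geomSumTmul M
  s_g := xPowTmul_zero_comp_map_actionMap M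
  id := (sub_eq_iff_eq_add.1 (xPowTmulDesc_geomSumTmul_comp_map_characteristicMap M).symm).symm

theorem shortExact_characteristicShortComplex : (characteristicShortComplex M).ShortExact :=
  have hG := (characteristicSplitting M).shortExact
  { exact := ((characteristicShortComplex M).exact_map_iff_of_faithful _).1 hG.exact
    mono_f := (restrictScalars C).mono_of_mono_map hG.mono_f
    epi_g := (restrictScalars C).epi_of_epi_map hG.epi_g }

end Characteristic

section UniformTorsion

/-- The modules `Ext^n(M, N)` over `A` are all uniformly `S`-torsion, where the element of `S` may
depend on `M` and `N`. -/
def ExtUniformlyTorsion {A : Type u} [CommRing A] (S : Submonoid A) (n : ℕ) : Prop :=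
  ∀ M N : ModuleCat.{u} A, ∃ s ∈ S, s ∈ Module.annihilator A (Abelian.Ext M N n)

variable {A : Type u} [CommRing A] {S : Submonoid A}

theorem ExtUniformlyTorsion.succ {n : ℕ} (h : ExtUniformlyTorsion S n) :
    ExtUniformlyTorsion S (n + 1) := fun M N ↦
  have := ModuleCat.projective_of_free (Module.Free.chooseBasis A M.projectiveShortComplex.X₂)
  let ⟨s, hs, hsM⟩ := h M.projectiveShortComplex.X₁ N
  ⟨s, hs, annihilator_ext_X₁_le_of_projective_X₂ A M.shortExact_projectiveShortComplex N n hsM⟩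

theorem ExtUniformlyTorsion.mono {m n : ℕ} (hmn : m ≤ n) (h : ExtUniformlyTorsion S m) :
    ExtUniformlyTorsion S n :=
  Nat.le_induction h (fun _ _ ↦ succ) n hmn

theorem extUniformlyTorsion_succ_iff {n : ℕ} :
    ExtUniformlyTorsion S (n + 1) ↔ ∀ M N : ModuleCat.{u} A, ∃ s ∈ S,
      ∀ x : ((Ext A (ModuleCat.{u} A) (n + 1)).obj (Opposite.op M)).obj N, s • x = 0 := by
  simp only [ExtUniformlyTorsion, ← (derivedExtLinearEquiv A _ _ _).annihilator_eq,
    Module.mem_annihilator]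

theorem sGlDim_le_natCast_iff {n : ℕ} : sGlDim A S ≤ n ↔ ExtUniformlyTorsion S (n + 1) := by
  simp only [sGlDim, ← extUniformlyTorsion_succ_iff]
  refine ⟨fun hle ↦ ?_, fun h ↦ sInf_le ⟨n, rfl, h⟩⟩
  obtain ⟨_, ⟨m, rfl, hm⟩, hmn⟩ := sInf_lt_iff.1 (ENat.lt_natCast_add_one_iff.2 hle)
  have hmn : m ≤ n := Nat.cast_le.1 (ENat.lt_natCast_add_one_iff.1 hmn)
  exact hm.mono (Nat.succ_le_succ hmn)

theorem ExtUniformlyTorsion.zero_mem (h : ExtUniformlyTorsion S 0) : (0 : A) ∈ S := by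
  obtain ⟨s, hs, hann⟩ := h (ModuleCat.of A A) (ModuleCat.of A A)
  have hid : s • 𝟙 (ModuleCat.of A A) = 0 := by
    rw [← Abelian.Ext.mk₀_eq_zero_iff, Abelian.Ext.mk₀_smul]
    exact Module.mem_annihilator.1 hann _
  have hzero : s • (1 : A) = 0 := ConcreteCategory.congr_hom hid 1
  rwa [← mul_one s, ← smul_eq_mul, hzero] at hs

end UniformTorsion

section Polynomial

open ModuleCat Polynomial

variable {R : Type u} [CommRing R]

theorem polynomial_C_flat : (C : R →+* R[X]).Flat := by
  rw [← algebraMap_eq, RingHom.flat_algebraMap_iff]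
  infer_instance

theorem C_mul_mem_annihilator_ext_succ {M N : ModuleCat.{u} R[X]} {n : ℕ} {s t : R}
    (hs : s ∈ Module.annihilator R (Abelian.Ext ((restrictScalars C).obj M)
      ((restrictScalars C).obj N) n))
    (ht : t ∈ Module.annihilator R (Abelian.Ext ((restrictScalars C).obj M)
      ((restrictScalars C).obj N) (n + 1))) :
    C (s * t) ∈ Module.annihilator R[X] (Abelian.Ext M N (n + 1)) := by
  rw [← mem_annihilator_ext_extendScalars_iff polynomial_C_flat] at hs ht
  rw [C_mul]
  exact annihilator_ext_X₁_mul_annihilator_ext_X₂_le R[X]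
    (shortExact_characteristicShortComplex M) N n (Ideal.mul_mem_mul hs ht)

theorem mem_annihilator_ext_restrictScalars_of_succ {M N : ModuleCat.{u} R[X]} {n : ℕ} {s : R}
    (hM : (X : R[X]) • 𝟙 M = 0) (hN : (X : R[X]) • 𝟙 N = 0)
    (hs : C s ∈ Module.annihilator R[X] (Abelian.Ext M N (n + 1))) :
    s ∈ Module.annihilator R (Abelian.Ext ((restrictScalars C).obj M)
      ((restrictScalars C).obj N) n) := by
  rw [← mem_annihilator_ext_extendScalars_iff polynomial_C_flat]
  refine annihilator_ext_X₃_le_of_mk₀_comp_eq_zero R[X]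
    (shortExact_characteristicShortComplex M) N n (fun x ↦ ?_) hs
  dsimp only
  rw [characteristicMap_eq_smul_id M hM, Abelian.Ext.mk₀_smul, Abelian.Ext.smul_comp,
    Abelian.Ext.mk₀_id_comp, Abelian.Ext.smul_eq_comp_mk₀, hN, Abelian.Ext.mk₀_zero,
    Abelian.Ext.comp_zero]

theorem X_smul_id_restrictScalars_evalRingHom_zero (M : ModuleCat.{u} R) :
    (X : R[X]) • 𝟙 ((restrictScalars (evalRingHom (0 : R))).obj M) = 0 := by
  ext (m : M)
  change (evalRingHom (0 : R) X) • m = 0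
  rw [coe_evalRingHom, eval_X, zero_smul]

/-- Restricting scalars along `R → R[X] → R`, the second map being evaluation at `0`, changes
nothing. -/
noncomputable def restrictScalarsEvalZeroIso (M : ModuleCat.{u} R) :
    (restrictScalars (C : R →+* R[X])).obj ((restrictScalars (evalRingHom 0)).obj M) ≅ M :=
  (restrictScalarsComp'App (C : R →+* R[X]) (evalRingHom 0) (.id R) (by ext; simp) M).symm ≪≫
    (restrictScalarsId R).app M

theorem extUniformlyTorsion_polynomial_succ_iff {S : Submonoid R} {n : ℕ} :
    ExtUniformlyTorsion (S.map (C : R →+* R[X]).toMonoidHom) (n + 1) ↔ ExtUniformlyTorsion S n where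
  mp h M N := by
    obtain ⟨_, ⟨s, hs, rfl⟩, hann⟩ := h ((restrictScalars (evalRingHom 0)).obj M)
      ((restrictScalars (evalRingHom 0)).obj N)
    have hrestrict := mem_annihilator_ext_restrictScalars_of_succ
      (X_smul_id_restrictScalars_evalRingHom_zero M) (X_smul_id_restrictScalars_evalRingHom_zero N)
      hann
    rw [annihilator_ext_congr R (restrictScalarsEvalZeroIso M) (restrictScalarsEvalZeroIso N) n]
      at hrestrict
    exact ⟨s, hs, hrestrict⟩
  mpr h M N := by
    obtain ⟨s, hs, hsM⟩ := h ((restrictScalars C).obj M) ((restrictScalars C).obj N)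
    obtain ⟨t, ht, htM⟩ := h.succ ((restrictScalars C).obj M) ((restrictScalars C).obj N)
    exact ⟨C (s * t), ⟨s * t, S.mul_mem hs ht, rfl⟩, C_mul_mem_annihilator_ext_succ hsM htM⟩

end Polynomial

/-- If `0 ∉ S`, then `S`-gl.dim`(R[x]) = S`-gl.dim`(R) + 1`, where `S` is viewed as a
multiplicative subset of `R[x]` via the constant embedding. -/
theorem stmt19 {R : Type u} [CommRing R] (S : Submonoid R) (h0 : (0 : R) ∉ S) :
    sGlDim (Polynomial R)
        (S.map (Polynomial.C : R →+* Polynomial R).toMonoidHom) =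
      sGlDim R S + 1 := by
  refine eq_of_forall_ge_iff fun c ↦ ?_
  induction c with
  | top => simp
  | coe n =>
    rw [sGlDim_le_natCast_iff, extUniformlyTorsion_polynomial_succ_iff]
    cases n with
    | zero => simpa using fun h ↦ h0 (ExtUniformlyTorsion.zero_mem h)
    | succ n =>
      rw [← sGlDim_le_natCast_iff, Nat.cast_succ, ENat.add_le_add_iff_right ENat.one_ne_top]
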